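/- arXiv:1906.12246 — 3 statements merged into one kernel-verified Lean document; each statement's English description precedes it below -/
import Mathlib

section
/- Let f: P → Q and g: P' → Q' be injective morphisms in P, and set X = coker(f), Y = coker(g) in R. Then there are isomorphisms (i) Hom_{Ho(R)}(C_f, C_g) ≅ Hom_R(X, Y) and (ii) Hom_{Ho(R)}(C_f, C_g^†) ≅ Ext¹_R(X, Y). -/
open CategoryTheory CategoryTheory.Limits Opposite

noncomputable section

universe u

variable (k : Type) [Field k] [Fintype k]
variable (R : Type u) [SmallCategory R] [Abelian R] [Linear k R] [EnoughProjectives R]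

/-- The objects `A` of `R` such that `Hom(M, A)` is a finite set for every `M`. -/
def IsFinHom (A : R) : Prop := ∀ M : R, Finite (M ⟶ A)

/-- The Euler form `⟨M,A⟩ = dim Hom(M,A) - dim Ext¹(M,A)`. -/
def euler (M A : R) : ℤ :=
  (Module.finrank k (M ⟶ A) : ℤ) -
    (Module.finrank k (((_root_.Ext k R 1).obj (op M)).obj A) : ℤ)

/-- The set of relations defining the Grothendieck group of `R`. -/
def sesSet : Set (FreeAbelianGroup R) :=
  {x | ∃ S : ShortComplex R, S.ShortExact ∧
    x = FreeAbelianGroup.of S.X₂ - FreeAbelianGroup.of S.X₁ - FreeAbelianGroup.of S.X₃}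

/-- The Grothendieck group `K(R)`. -/
abbrev K0 := FreeAbelianGroup R ⧸ AddSubgroup.closure (sesSet R)

/-- The class of an object in `K(R)`. -/
def K0.cls (X : R) : K0 R := QuotientAddGroup.mk (FreeAbelianGroup.of X)

/-- The set of relations defining the Grothendieck group of the subcategory `A`. -/
def sesSetA : Set (FreeAbelianGroup {A : R // IsFinHom R A}) :=
  {x | ∃ (S : ShortComplex R) (h1 : IsFinHom R S.X₁) (h2 : IsFinHom R S.X₂)
      (h3 : IsFinHom R S.X₃), S.ShortExact ∧
    x = FreeAbelianGroup.of ⟨S.X₂, h2⟩ - FreeAbelianGroup.of ⟨S.X₁, h1⟩ -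
      FreeAbelianGroup.of ⟨S.X₃, h3⟩}

/-- The Grothendieck group `K(A)`. -/
abbrev KA := FreeAbelianGroup {A : R // IsFinHom R A} ⧸ AddSubgroup.closure (sesSetA R)

/-- The class of an object of `A` in `K(A)`. -/
def KA.cls (A : {A : R // IsFinHom R A}) : KA R := QuotientAddGroup.mk (FreeAbelianGroup.of A)

/-- `R` is hereditary, i.e. of global dimension at most 1. -/
def Hereditary : Prop :=
  ∀ X Y : R, Subsingleton (((_root_.Ext k R 2).obj (op X)).obj Y)

/-- Condition (c): cancellation for projectives. -/
def CondC : Prop :=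
  ∀ P Q M : R, Projective P → Projective Q → Projective M →
    Nonempty ((M ⊞ P) ≅ (M ⊞ Q)) → Nonempty (P ≅ Q)

/-- Condition (d): every element of `K(R)` is a `ℚ`-linear combination of classes of
objects of `A`. -/
def CondD : Prop :=
  ∀ x : K0 R, ∃ n : ℕ, n ≠ 0 ∧ (n : ℤ) • x ∈
    AddSubgroup.closure (Set.range fun A : {A : R // IsFinHom R A} => K0.cls R A.1)

/-- Condition (e). -/
def CondE : Prop :=
  ∀ A B : R, IsFinHom R A → IsFinHom R B → K0.cls R A = K0.cls R B →
    ∀ P : R, Projective P → Nat.card (P ⟶ A) = Nat.card (P ⟶ B)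

structure Z2Cx where
  X0 : R
  X1 : R
  d0 : X0 ⟶ X1
  d1 : X1 ⟶ X0
  d01 : d0 ≫ d1 = 0
  d10 : d1 ≫ d0 = 0

namespace Z2Cx

variable {R}

/-- Morphisms of `ℤ/2`-graded complexes. -/
@[ext] structure Hom (M N : Z2Cx R) where
  f0 : M.X0 ⟶ N.X0
  f1 : M.X1 ⟶ N.X1
  comm0 : M.d0 ≫ f1 = f0 ≫ N.d0
  comm1 : M.d1 ≫ f0 = f1 ≫ N.d1

instance : CategoryStruct (Z2Cx R) where
  Hom := Hom
  id M := ⟨𝟙 _, 𝟙 _, by simp, by simp⟩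
  comp {M N P} f g := ⟨f.f0 ≫ g.f0, f.f1 ≫ g.f1, by
      rw [← Category.assoc, f.comm0, Category.assoc, g.comm0, Category.assoc], by
      rw [← Category.assoc, f.comm1, Category.assoc, g.comm1, Category.assoc]⟩

@[simp] lemma id_f0 (M : Z2Cx R) : (𝟙 M : Hom M M).f0 = 𝟙 M.X0 := rfl
@[simp] lemma id_f1 (M : Z2Cx R) : (𝟙 M : Hom M M).f1 = 𝟙 M.X1 := rfl
@[simp] lemma comp_f0 {M N P : Z2Cx R} (f : M ⟶ N) (g : N ⟶ P) :
    (f ≫ g).f0 = Hom.f0 f ≫ Hom.f0 g := rfl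
@[simp] lemma comp_f1 {M N P : Z2Cx R} (f : M ⟶ N) (g : N ⟶ P) :
    (f ≫ g).f1 = Hom.f1 f ≫ Hom.f1 g := rfl

instance : Category (Z2Cx R) where
  id_comp f := by apply Hom.ext <;> simp
  comp_id f := by apply Hom.ext <;> simp
  assoc f g h := by apply Hom.ext <;> simp

variable (R)

/-- The two-term complex `C_f` associated to a morphism `f`, concentrated so that
`X1 = P`, `X0 = Q`, `d1 = f`, `d0 = 0`. -/
def Cf {P Q : R} (f : P ⟶ Q) : Z2Cx R := ⟨Q, P, 0, f, by simp, by simp⟩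

/-- The shift involution `†`: it interchanges the gradings and negates the differentials. -/
def dagger (M : Z2Cx R) : Z2Cx R :=
  ⟨M.X1, M.X0, -M.d1, -M.d0, by simp [M.d10], by simp [M.d01]⟩

/-- The acyclic complex `K_P` with `d1 = 𝟙 P` and `d0 = 0`. -/
def KP (P : R) : Z2Cx R := ⟨P, P, 0, 𝟙 P, by simp, by simp⟩

/-- Direct sum of `ℤ/2`-graded complexes. -/
def dsum (M N : Z2Cx R) : Z2Cx R where
  X0 := M.X0 ⊞ N.X0
  X1 := M.X1 ⊞ N.X1
  d0 := biprod.map M.d0 N.d0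
  d1 := biprod.map M.d1 N.d1
  d01 := by ext <;> simp [M.d01, N.d01]
  d10 := by ext <;> simp [M.d10, N.d10]

/-- Degree `0` homology of a `ℤ/2`-graded complex. -/
def H0 (M : Z2Cx R) : R := (ShortComplex.mk M.d1 M.d0 M.d10).homology

/-- Degree `1` homology of a `ℤ/2`-graded complex. -/
def H1 (M : Z2Cx R) : R := (ShortComplex.mk M.d0 M.d1 M.d01).homology

/-- The homology complex `H•(M•)`, with zero differentials. -/
def Hcx (M : Z2Cx R) : Z2Cx R := ⟨H0 R M, H1 R M, 0, 0, by simp, by simp⟩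

/-- A complex is acyclic if its homology vanishes. -/
def Acyclic (M : Z2Cx R) : Prop := IsZero (H0 R M) ∧ IsZero (H1 R M)

end Z2Cx

namespace Z2Cx

variable {R}

/-- Two morphisms of `ℤ/2`-graded complexes are homotopic. -/
def Homotopic (M N : Z2Cx R) (s t : M ⟶ N) : Prop :=
  ∃ (h0 : M.X0 ⟶ N.X1) (h1 : M.X1 ⟶ N.X0),
    Hom.f0 t = Hom.f0 s + h0 ≫ N.d1 + M.d0 ≫ h1 ∧
    Hom.f1 t = Hom.f1 s + h1 ≫ N.d0 + M.d1 ≫ h0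

/-- Hom-sets in the homotopy category `Ho(R)` of `ℤ/2`-graded complexes. -/
def HoHom (M N : Z2Cx R) := Quot (Homotopic M N)

end Z2Cx

open Z2Cx

/-!
If `f` is mono with projective source and target, then `P ⟶ Q` is a projective resolution of
`X = coker f`. A morphism `C_f ⟶ C_g` is a commutative square, every morphism `X ⟶ Y = coker g`
lifts to one, and two squares induce the same morphism exactly when their components `Q ⟶ Q'`
differ by a morphism factoring through `g`; such a factorization `Q ⟶ P'` is a homotopy. A morphism
`C_f ⟶ C_g†` is just a morphism `P ⟶ Q'`, and it is null-homotopic exactly when it has the form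
`f ≫ u + v ≫ g`. This says that its composite with `Q' ⟶ Y` extends along `f`, so the homotopy
classes form the cokernel of `Hom(Q, Y) ⟶ Hom(P, Y)`, which is `Ext¹(X, Y)`.
-/

section ExtOne

open scoped ZeroObject

variable {A : Type*} [Ring A] {C : Type*} [Category* C] [Abelian C]

/-- The chain complex `⋯ ⟶ 0 ⟶ X ⟶ Y` with `Y` in degree `0`, used as a resolution of the cokernel
of a monomorphism `X ⟶ Y`. -/
def twoTermComplex {X Y : C} (f : X ⟶ Y) : ChainComplex C ℕ :=
  ChainComplex.mk' Y X f fun _ => ⟨0, 0, zero_comp⟩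

lemma twoTermComplex_d_one_zero {X Y : C} (f : X ⟶ Y) : (twoTermComplex f).d 1 0 = f :=
  ChainComplex.mk'_d_1_0 ..

lemma isZero_twoTermComplex_X_add_two {X Y : C} (f : X ⟶ Y) (n : ℕ) :
    IsZero ((twoTermComplex f).X (n + 2)) :=
  (isZero_zero C).of_iso (ChainComplex.mk'XIso _ _ _ (fun _ => ⟨0, 0, zero_comp⟩) n)

lemma twoTermComplex_exactAt_succ {X Y : C} (f : X ⟶ Y) [Mono f] (n : ℕ) :
    (twoTermComplex f).ExactAt (n + 1) := by
  rw [HomologicalComplex.exactAt_iff' _ (n + 2) (n + 1) n (by simp) (by simp)]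
  cases n with
  | zero =>
    have hf : Mono ((twoTermComplex f).d 1 0) := (twoTermComplex_d_one_zero f).symm ▸ ‹Mono f›
    exact (ShortComplex.exact_iff_mono ((twoTermComplex f).sc' 2 1 0)
      ((isZero_twoTermComplex_X_add_two f 0).eq_of_src _ _)).2 hf
  | succ n => exact ShortComplex.exact_of_isZero_X₂ _ (isZero_twoTermComplex_X_add_two f n)

/-- A short exact sequence `0 ⟶ P ⟶ Q ⟶ X ⟶ 0` with `P` and `Q` projective, read as a projective
resolution of `X` of length one. -/
def twoTermResolution {S : ShortComplex C} (hS : S.ShortExact)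
    [Projective S.X₁] [Projective S.X₂] : ProjectiveResolution S.X₃ where
  complex := twoTermComplex S.f
  projective
    | 0 => ‹Projective S.X₂›
    | 1 => ‹Projective S.X₁›
    | n + 2 => (isZero_twoTermComplex_X_add_two S.f n).projective
  π := (ChainComplex.toSingle₀Equiv _ _).symm
    ⟨S.g, (congrArg (· ≫ S.g) (twoTermComplex_d_one_zero S.f)).trans S.zero⟩
  quasiIso := ⟨fun
    | 0 => by
      rw [ChainComplex.quasiIsoAt₀_iff, ShortComplex.quasiIso_iff_of_zeros' _ rfl rfl rfl]
      refine (ShortComplex.exact_and_epi_g_iff_of_iso ?_).2 ⟨hS.exact, hS.epi_g⟩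
      refine ShortComplex.isoMk (Iso.refl S.X₁) (Iso.refl S.X₂) (Iso.refl S.X₃) ?_ ?_
      · exact (Category.id_comp _).trans
          ((twoTermComplex_d_one_zero S.f).symm.trans (Category.comp_id _).symm)
      · exact (Category.id_comp S.g).trans
          ((ChainComplex.toSingle₀Equiv_symm_apply_f_zero (C := twoTermComplex S.f) ..).symm.trans
            (Category.comp_id _).symm)
    | n + 1 => by
      have := hS.mono_f
      exact (quasiIsoAt_iff_exactAt' _ _ (ChainComplex.exactAt_succ_single_obj ..)).2
        (twoTermComplex_exactAt_succ S.f n)⟩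

variable [Linear A C] [EnoughProjectives C]

variable (A) in
/-- `Ext^{n+1}(X, Y)` as the cokernel of `Hom(Pₙ, Y) ⟶ Hom(Pₙ₊₁, Y)`, for a projective resolution
`P` of `X` that stops in degree `n + 1`. -/
def extSuccLinearEquiv {X : C} (P : ProjectiveResolution X) (n : ℕ)
    (hP : IsZero (P.complex.X (n + 2))) (Y : C) :
    ((_root_.Ext A C (n + 1)).obj (op X)).obj Y ≃ₗ[A]
      (P.complex.X (n + 1) ⟶ Y) ⧸
        LinearMap.range (Linear.leftComp A Y (P.complex.d (n + 1) n)) :=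
  let K := P.complex.linearYonedaObj A Y
  let T := K.sc' n (n + 1) (n + 2)
  have hT : T.g = 0 := by
    ext
    exact hP.eq_of_src _ _
  (P.isoExt (n + 1) Y ≪≫ K.homologyIsoSc' n (n + 1) (n + 2) (by simp) (by simp) ≪≫
    T.asIsoHomologyι hT ≪≫ T.moduleCatOpcyclesIso).toLinearEquiv

variable (A) in
/-- `Ext¹(X, Y)` as the cokernel of `Hom(Q, Y) ⟶ Hom(P, Y)`, for a presentation
`0 ⟶ P ⟶ Q ⟶ X ⟶ 0` by projective objects. -/
def extOneLinearEquiv {S : ShortComplex C} (hS : S.ShortExact)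
    [Projective S.X₁] [Projective S.X₂] (Y : C) :
    ((_root_.Ext A C 1).obj (op S.X₃)).obj Y ≃ₗ[A]
      (S.X₁ ⟶ Y) ⧸ LinearMap.range (Linear.leftComp A Y S.f) :=
  extSuccLinearEquiv A (twoTermResolution hS) 0 (isZero_twoTermComplex_X_add_two S.f 0) Y ≪≫ₗ
    Submodule.quotEquivOfEq _ _
      (congrArg (fun d => LinearMap.range (Linear.leftComp A Y d)) (twoTermComplex_d_one_zero S.f))

end ExtOne

section Cokernel

variable {C : Type*} [Category* C] [Abelian C] {P Q P' Q' : C} {f : P ⟶ Q} {g : P' ⟶ Q'} [Mono g]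

lemma comp_cokernel_π_eq_zero_iff {T : C} (a : T ⟶ Q') :
    a ≫ cokernel.π g = 0 ↔ ∃ b : T ⟶ P', a = b ≫ g :=
  ⟨fun ha => ⟨Abelian.monoLift g a ha, (Abelian.monoLift_comp g a ha).symm⟩,
    by rintro ⟨b, rfl⟩; simp⟩

lemma cokernel_map_eq_iff {b b' : P ⟶ P'} {a a' : Q ⟶ Q'} (w : f ≫ a = b ≫ g)
    (w' : f ≫ a' = b' ≫ g) :
    cokernel.map f g b a w = cokernel.map f g b' a' w' ↔ ∃ h : Q ⟶ P', a' = a + h ≫ g := by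
  simp only [← cancel_epi (cokernel.π f), cokernel.π_desc, eq_comm (a := a ≫ _),
    ← sub_eq_iff_eq_add', ← comp_cokernel_π_eq_zero_iff, Preadditive.sub_comp, sub_eq_zero]

lemma exists_cokernel_map_eq [Projective Q] (t : cokernel f ⟶ cokernel g) :
    ∃ (b : P ⟶ P') (a : Q ⟶ Q') (w : f ≫ a = b ≫ g), cokernel.map f g b a w = t := by
  obtain ⟨a, ha⟩ : ∃ a, a ≫ cokernel.π g = cokernel.π f ≫ t := Projective.factors ..
  obtain ⟨b, w⟩ := (comp_cokernel_π_eq_zero_iff (g := g) (f ≫ a)).1 (by simp [ha])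
  exact ⟨b, a, w, by simpa [← cancel_epi (cokernel.π f)] using ha⟩

lemma exists_comp_eq_comp_cokernel_π_iff [Projective Q] (a : P ⟶ Q') :
    (∃ c : Q ⟶ cokernel g, f ≫ c = a ≫ cokernel.π g) ↔
      ∃ (u : Q ⟶ Q') (v : P ⟶ P'), a = f ≫ u + v ≫ g := by
  constructor
  · rintro ⟨c, hc⟩
    obtain ⟨u, rfl⟩ := Projective.factors c (cokernel.π g)
    obtain ⟨v, hv⟩ := (comp_cokernel_π_eq_zero_iff (g := g) (a - f ≫ u)).1 (by simp [hc])
    exact ⟨u, v, sub_eq_iff_eq_add'.1 hv⟩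
  · rintro ⟨u, v, rfl⟩
    exact ⟨u ≫ cokernel.π g, by simp⟩

end Cokernel

namespace Z2Cx

variable {C : Type*} [SmallCategory C] [Abelian C] {P Q P' Q' : C} {f : P ⟶ Q} {g : P' ⟶ Q'}

/-- Morphisms `C_f ⟶ C_g` as commutative squares, the component in degree `1` first; the
compatibility with `d₀` is automatic since `d₀ = 0` on both sides. -/
def homCfEquiv :
    (Cf C f ⟶ Cf C g) ≃ {s : (P ⟶ P') × (Q ⟶ Q') // f ≫ s.2 = s.1 ≫ g} where
  toFun s := ⟨(Hom.f1 s, Hom.f0 s), s.comm1⟩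
  invFun s := ⟨s.1.2, s.1.1, zero_comp.trans comp_zero.symm, s.2⟩

lemma homotopic_Cf_iff [Mono g] (s t : Cf C f ⟶ Cf C g) :
    Homotopic _ _ s t ↔ ∃ h : Q ⟶ P', (homCfEquiv t).1.2 = (homCfEquiv s).1.2 + h ≫ g := by
  have homotopic_iff : Homotopic _ _ s t ↔ ∃ (h : Q ⟶ P') (h' : P ⟶ Q'),
      (homCfEquiv t).1.2 = (homCfEquiv s).1.2 + h ≫ g + 0 ≫ h' ∧
        (homCfEquiv t).1.1 = (homCfEquiv s).1.1 + h' ≫ 0 + f ≫ h := Iff.rfl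
  simp only [homotopic_iff, zero_comp, comp_zero, add_zero, exists_const]
  refine exists_congr fun h => and_iff_left_of_imp fun e => ?_
  rw [← cancel_mono g, ← (homCfEquiv t).2, e, Preadditive.comp_add, (homCfEquiv s).2,
    Preadditive.add_comp, Category.assoc]

/-- The morphism `coker f ⟶ coker g` induced by a morphism `C_f ⟶ C_g`. -/
def cokernelMap (s : Cf C f ⟶ Cf C g) : cokernel f ⟶ cokernel g :=
  cokernel.map f g (homCfEquiv s).1.1 (homCfEquiv s).1.2 (homCfEquiv s).2

lemma homotopic_iff_cokernelMap_eq [Mono g] (s t : Cf C f ⟶ Cf C g) :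
    Homotopic _ _ s t ↔ cokernelMap s = cokernelMap t :=
  (homotopic_Cf_iff s t).trans (cokernel_map_eq_iff (homCfEquiv s).2 (homCfEquiv t).2).symm

lemma cokernelMap_surjective [Projective Q] [Mono g] :
    Function.Surjective (cokernelMap : (Cf C f ⟶ Cf C g) → _) := fun t =>
  let ⟨b, a, w, e⟩ := exists_cokernel_map_eq t
  ⟨homCfEquiv.symm ⟨(b, a), w⟩, e⟩

/-- Homotopy classes of morphisms `C_f ⟶ C_g` as morphisms between the cokernels. -/
def hoHomCfEquiv [Projective Q] [Mono g] :
    HoHom (Cf C f) (Cf C g) ≃ (cokernel f ⟶ cokernel g) :=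
  (Quot.congrRight homotopic_iff_cokernelMap_eq).trans
    (Setoid.quotientKerEquivOfSurjective cokernelMap cokernelMap_surjective)

/-- Morphisms `C_f ⟶ C_g†` as arbitrary morphisms `P ⟶ Q'`: the component `Q ⟶ P'` in degree `0`
vanishes, as its composite with the monomorphism `-g` does. -/
def homDaggerEquiv [Mono g] : (Cf C f ⟶ dagger C (Cf C g)) ≃ (P ⟶ Q') where
  toFun s := Hom.f1 s
  invFun a := ⟨0, a, zero_comp.trans zero_comp.symm,
    have neg_zero_comp : a ≫ (-(0 : Q' ⟶ P')) = 0 := by simp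
    comp_zero.trans neg_zero_comp.symm⟩
  left_inv s := by
    have h : (0 : Q ⟶ P) ≫ (Hom.f1 s : P ⟶ Q') = (Hom.f0 s : Q ⟶ P') ≫ (-g) := s.comm0
    exact Hom.ext (zero_of_comp_mono (-g) (h.symm.trans zero_comp)).symm rfl

lemma homotopic_dagger_iff [Mono g] (s t : Cf C f ⟶ dagger C (Cf C g)) :
    Homotopic _ _ s t ↔
      ∃ (u : Q ⟶ Q') (v : P ⟶ P'), homDaggerEquiv s - homDaggerEquiv t = f ≫ u + v ≫ g := by
  obtain ⟨a, rfl⟩ := homDaggerEquiv.symm.surjective s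
  obtain ⟨b, rfl⟩ := homDaggerEquiv.symm.surjective t
  have homotopic_iff : Homotopic _ _ (homDaggerEquiv.symm a) (homDaggerEquiv.symm b) ↔
      ∃ (h : Q ⟶ Q') (h' : P ⟶ P'), (0 : Q ⟶ P') = 0 + h ≫ (-(0 : Q' ⟶ P')) + (0 : Q ⟶ P) ≫ h' ∧
        b = a + h' ≫ (-g) + f ≫ h := Iff.rfl
  simp only [homotopic_iff, Equiv.apply_symm_apply, neg_zero, comp_zero, zero_comp, add_zero,
    true_and]
  refine (Equiv.neg _).exists_congr fun h => exists_congr fun h' => ?_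
  simp only [Equiv.neg_apply, Preadditive.comp_neg]
  grind

/-- Homotopy classes of morphisms `C_f ⟶ C_g†` as the cokernel of
`Hom(Q, coker g) ⟶ Hom(P, coker g)`. -/
def hoHomDaggerEquiv (A : Type*) [Ring A] [Linear A C] [Projective P] [Projective Q] [Mono g] :
    HoHom (Cf C f) (dagger C (Cf C g)) ≃
      (P ⟶ cokernel g) ⧸ LinearMap.range (Linear.leftComp A (cokernel g) f) :=
  let φ (s : Cf C f ⟶ dagger C (Cf C g)) :=
    (LinearMap.range (Linear.leftComp A (cokernel g) f)).mkQ (homDaggerEquiv s ≫ cokernel.π g)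
  have φ_surjective : Function.Surjective φ :=
    (Submodule.mkQ_surjective _).comp
      (Function.Surjective.comp (fun c => Projective.factors c (cokernel.π g))
        homDaggerEquiv.surjective)
  have homotopic_iff (s t) : Homotopic _ _ s t ↔ φ s = φ t := by
    simp only [φ, homotopic_dagger_iff, ← exists_comp_eq_comp_cokernel_π_iff, Submodule.mkQ_apply,
      Submodule.Quotient.eq, Preadditive.sub_comp, LinearMap.mem_range, Linear.leftComp_apply]
  (Quot.congrRight homotopic_iff).trans (Setoid.quotientKerEquivOfSurjective φ φ_surjective)

end Z2Cx

theorem stmt8_general (A : Type*) [Ring A] {C : Type*} [SmallCategory C] [Abelian C] [Linear A C]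
    [EnoughProjectives C] {P Q P' Q' : C} [Projective P] [Projective Q] (f : P ⟶ Q) (g : P' ⟶ Q')
    [Mono f] [Mono g] :
    Nonempty (HoHom (Cf C f) (Cf C g) ≃ (cokernel f ⟶ cokernel g)) ∧
    Nonempty (HoHom (Cf C f) (dagger C (Cf C g)) ≃
      (((_root_.Ext A C 1).obj (op (cokernel f))).obj (cokernel g))) := by
  have hS : (ShortComplex.mk f (cokernel.π f) (cokernel.condition f)).ShortExact :=
    { exact := ShortComplex.exact_cokernel f }
  exact ⟨⟨hoHomCfEquiv⟩,
    ⟨(hoHomDaggerEquiv A).trans (extOneLinearEquiv A hS (cokernel g)).symm.toEquiv⟩⟩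

theorem stmt8 (hH : Hereditary k R) (hc : CondC R) (hd : CondD R) (he : CondE R)
    {P Q P' Q' : R} (hP : Projective P) (hQ : Projective Q) (hP' : Projective P')
    (hQ' : Projective Q') (f : P ⟶ Q) (g : P' ⟶ Q') (hf : Mono f) (hg : Mono g) :
    Nonempty (HoHom (Cf R f) (Cf R g) ≃ (cokernel f ⟶ cokernel g)) ∧
    Nonempty (HoHom (Cf R f) (dagger R (Cf R g)) ≃
      (((_root_.Ext k R 1).obj (op (cokernel f))).obj (cokernel g))) :=
  stmt8_general k f g

end
end

section
/- For all complexes M•, N• ∈ C_fin(P), the set Ext¹_{C(R)}(M•, N•) is finite. -/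
open CategoryTheory CategoryTheory.Limits Opposite

noncomputable section

universe u

variable (k : Type) [Field k] [Fintype k]
variable (R : Type u) [SmallCategory R] [Abelian R] [Linear k R] [EnoughProjectives R]

namespace Z2Cx

variable {R}

/-- A short exact sequence of `ℤ/2`-graded complexes, exhibiting an extension of `M` by `N`
(short exactness of a sequence of complexes is componentwise short exactness). -/
structure ExtSES (M N : Z2Cx R) where
  E : Z2Cx R
  i : N ⟶ E
  p : E ⟶ M
  w0 : Hom.f0 i ≫ Hom.f0 p = 0
  w1 : Hom.f1 i ≫ Hom.f1 p = 0
  ex0 : (ShortComplex.mk (Hom.f0 i) (Hom.f0 p) w0).ShortExact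
  ex1 : (ShortComplex.mk (Hom.f1 i) (Hom.f1 p) w1).ShortExact

/-- Equivalence of extensions of complexes. -/
def ExtEquiv (M N : Z2Cx R) (s t : ExtSES M N) : Prop :=
  ∃ φ : s.E ≅ t.E, s.i ≫ φ.hom = t.i ∧ φ.hom ≫ t.p = s.p

/-- The set `Ext¹_{C(R)}(M•, N•)` of equivalence classes of extensions of `M•` by `N•`
in the category of `ℤ/2`-graded complexes over `R`. -/
def ExtCl (M N : Z2Cx R) := Quot (ExtEquiv M N)

end Z2Cx

/-- Complexes of projectives with homology in the subcategory `A`, i.e. objects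
of `C_fin(P)`. -/
def FinCx (M : Z2Cx R) : Prop :=
  Projective M.X0 ∧ Projective M.X1 ∧ IsFinHom R (Z2Cx.H0 R M) ∧ IsFinHom R (Z2Cx.H1 R M)

open Z2Cx

/-!
An extension of `M•` by `N•` with projective terms `M₀`, `M₁` splits degreewise, and the
off-diagonal entries of its differentials form an odd cocycle of the `ℤ/2`-graded complex
`Hom(M•, N•)`. Cocycles differing by a coboundary give equivalent extensions, so it is enough that
the odd cohomology of `Hom(M•, N•)` is finite. Over a hereditary category the boundaries of `M•`
are projective, hence `M•` is a degreewise split extension of its complex of boundaries by its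
complex of cycles. Both have projective terms and zero differentials, so that the odd cohomology
of their Hom complexes into `N•` is a sum of groups `Hom(P, Hᵢ(N•))`, which are finite; a long
exact sequence argument concludes.
-/

section FiniteIndex

theorem isFiniteRelIndex_of_exact {A B C : Type*} [AddCommGroup A] [AddCommGroup B]
    [AddCommGroup C] (f : A →+ B) (g : B →+ C) {ZA BA : AddSubgroup A} {ZB BB : AddSubgroup B}
    {ZC BC : AddSubgroup C} (map_f : BA.map f ≤ BB) (map_g : ZB.map g ≤ ZC)
    (exact : ZB ⊓ BC.comap g ≤ ZA.map f ⊔ BB) (hA : BA.IsFiniteRelIndex ZA)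
    (hC : BC.IsFiniteRelIndex ZC) : BB.IsFiniteRelIndex ZB := by
  have image_finite : BB.relIndex (ZA.map f ⊔ BB) ≠ 0 := by
    rw [AddSubgroup.relIndex_sup_right, ← AddSubgroup.relIndex_comap]
    exact (AddSubgroup.isFiniteRelIndex_of_le_left ZA
      (AddSubgroup.map_le_iff_le_comap.mp map_f)).relIndex_ne_zero
  have coimage_finite : (ZB ⊓ BC.comap g).relIndex ZB ≠ 0 := by
    rw [AddSubgroup.inf_relIndex_left, AddSubgroup.relIndex_comap]
    exact (AddSubgroup.isFiniteRelIndex_of_le_right _ map_g).relIndex_ne_zero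
  exact ⟨AddSubgroup.relIndex_ne_zero_trans image_finite
    fun h => coimage_finite (AddSubgroup.relIndex_eq_zero_of_le_left exact h)⟩

theorem isFiniteRelIndex_prod {A B : Type*} [AddCommGroup A] [AddCommGroup B]
    {H K : AddSubgroup A} {H' K' : AddSubgroup B} (h : H.IsFiniteRelIndex K)
    (h' : H'.IsFiniteRelIndex K') : (H.prod H').IsFiniteRelIndex (K.prod K') := by
  have fst_finite : (H.comap (AddMonoidHom.fst A B)).relIndex (K.prod K') ≠ 0 := by
    rw [AddSubgroup.relIndex_comap]
    exact fun h₀ => h.relIndex_ne_zero (AddSubgroup.relIndex_eq_zero_of_le_right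
      (AddSubgroup.map_le_iff_le_comap.mpr fun _ hx => (AddSubgroup.mem_prod.mp hx).1) h₀)
  have snd_finite : (H'.comap (AddMonoidHom.snd A B)).relIndex (K.prod K') ≠ 0 := by
    rw [AddSubgroup.relIndex_comap]
    exact fun h₀ => h'.relIndex_ne_zero (AddSubgroup.relIndex_eq_zero_of_le_right
      (AddSubgroup.map_le_iff_le_comap.mpr fun _ hx => (AddSubgroup.mem_prod.mp hx).2) h₀)
  have prod_eq : H.prod H' =
      H.comap (AddMonoidHom.fst A B) ⊓ H'.comap (AddMonoidHom.snd A B) :=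
    AddSubgroup.ext fun _ => AddSubgroup.mem_prod
  exact ⟨prod_eq ▸ AddSubgroup.relIndex_inf_ne_zero fst_finite snd_finite⟩

end FiniteIndex

section Hereditary

open Abelian

theorem projective_X₁_of_subsingleton_ext_two {C : Type*} [Category* C] [Abelian C]
    [HasExt.{u} C] {S : ShortComplex C} (hS : S.ShortExact) [Projective S.X₂]
    (h : ∀ Y, Subsingleton (Ext S.X₃ Y 2)) : Projective S.X₁ := by
  rw [projective_iff_subsingleton_ext_one]
  intro Y
  refine subsingleton_of_forall_eq 0 fun x => ?_
  obtain ⟨y, rfl⟩ := Ext.contravariant_sequence_exact₁ hS Y x rfl (Subsingleton.elim _ _)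
  rw [Ext.eq_zero_of_projective y, Ext.comp_zero]

variable {C : Type u} [SmallCategory C] [Abelian C]

theorem Hereditary.subsingleton_ext_two {K : Type} [Field K] [Linear K C] [EnoughProjectives C]
    [HasExt.{u} C] (hC : Hereditary K C) (X Y : C) : Subsingleton (Ext X Y 2) := by
  let P := ProjectiveResolution.of X
  have cocycles_exact : (P.complex.linearYonedaObj K Y).ExactAt 2 := by
    rw [HomologicalComplex.exactAt_iff_isZero_homology]
    have := hC X Y
    exact (ModuleCat.isZero_of_subsingleton _).of_iso (P.isoExt 2 Y).symm
  rw [HomologicalComplex.exactAt_iff' _ 1 2 3 (by simp) (by simp),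
    ShortComplex.moduleCat_exact_iff] at cocycles_exact
  refine subsingleton_of_forall_eq 0 fun α => ?_
  obtain ⟨f, hf, rfl⟩ := P.extMk_surjective α 3 rfl
  exact (P.extMk_eq_zero_iff f 3 rfl hf 1 rfl).mpr (cocycles_exact f hf)

theorem Hereditary.projective_of_mono {K : Type} [Field K] [Linear K C] [EnoughProjectives C]
    (hC : Hereditary K C) {X Y : C} [Projective Y] (f : X ⟶ Y) [Mono f] : Projective X := by
  have := HasExt.standard C
  let S := ShortComplex.mk f (cokernel.π f) (cokernel.condition f)
  have hS : S.ShortExact := { exact := ShortComplex.exact_cokernel f }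
  have : Projective S.X₂ := ‹Projective Y›
  exact projective_X₁_of_subsingleton_ext_two hS fun Z => hC.subsingleton_ext_two _ Z

end Hereditary

section Abelian

variable {C : Type*} [Category* C]

theorem finite_hom_of_epi {X Y : C} (e : X ⟶ Y) [Epi e] (Z : C) [Finite (X ⟶ Z)] :
    Finite (Y ⟶ Z) :=
  Finite.of_injective (e ≫ ·) fun _ _ => (cancel_epi e).mp

variable [Abelian C]

theorem shortExact_kernel_image {X Y : C} (d : X ⟶ Y) :
    (ShortComplex.mk (kernel.ι d) (factorThruImage d)
      (comp_factorThruImage_eq_zero (kernel.condition d))).ShortExact where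
  exact := ShortComplex.exact_of_f_is_kernel _
    (isKernelOfComp (image.ι d) d (kernelIsKernel d) _ (image.fac d))

theorem isFiniteRelIndex_range_rightComp (P : C) [Projective P] (S : ShortComplex C)
    [Finite (P ⟶ S.homology)] :
    (Preadditive.rightComp P S.f).range.IsFiniteRelIndex (Preadditive.rightComp P S.g).ker := by
  let ι : (P ⟶ S.cycles) →+ (P ⟶ S.X₂) := Preadditive.rightComp P S.iCycles
  let π : (P ⟶ S.cycles) →+ (P ⟶ S.homology) := Preadditive.rightComp P S.homologyπ
  have ker_le : (Preadditive.rightComp P S.g).ker ≤ (⊤ : AddSubgroup (P ⟶ S.cycles)).map ι :=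
    fun f hf => ⟨S.liftCycles f hf, trivial, S.liftCycles_i f hf⟩
  have ker_π_le : π.ker ≤ (Preadditive.rightComp P S.f).range.comap ι := fun z hz => by
    have exact : (ShortComplex.mk S.toCycles S.homologyπ (by simp)).Exact :=
      ShortComplex.exact_of_g_is_cokernel _ S.homologyIsCokernel
    obtain ⟨t, rfl⟩ : ∃ t, t ≫ S.toCycles = z :=
      ⟨exact.liftFromProjective z hz, exact.liftFromProjective_comp z hz⟩
    refine ⟨t, ?_⟩
    change t ≫ S.f = (t ≫ S.toCycles) ≫ S.iCycles
    rw [Category.assoc, S.toCycles_i]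
  have : π.ker.IsFiniteRelIndex ⊤ := AddSubgroup.isFiniteRelIndex_of_finiteIndex
  have : ((Preadditive.rightComp P S.f).range.comap ι).IsFiniteRelIndex ⊤ :=
    AddSubgroup.isFiniteRelIndex_of_le_left ⊤ ker_π_le
  refine ⟨fun h₀ => this.relIndex_ne_zero ?_⟩
  rw [AddSubgroup.relIndex_comap]
  exact AddSubgroup.relIndex_eq_zero_of_le_right ker_le h₀

end Abelian

section SplitMorphisms

variable {C : Type*} [Category* C] [Preadditive C] {X Y Z : ShortComplex C}

/-- Splittings identify the middle terms with direct sums, so that a morphism of split short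
complexes becomes an upper triangular `2 × 2` matrix; this is its off-diagonal entry. -/
def offDiag (S : X.Splitting) (T : Y.Splitting) (φ : X ⟶ Y) : X.X₃ ⟶ Y.X₁ :=
  S.s ≫ φ.τ₂ ≫ T.r

theorem section_comp (S : X.Splitting) (T : Y.Splitting) (φ : X ⟶ Y) :
    S.s ≫ φ.τ₂ = offDiag S T φ ≫ Y.f + φ.τ₃ ≫ T.s := by
  have h : S.s ≫ φ.τ₂ ≫ Y.g = φ.τ₃ := by rw [φ.comm₂₃, S.s_g_assoc]
  calc S.s ≫ φ.τ₂ = (S.s ≫ φ.τ₂) ≫ (T.r ≫ Y.f + Y.g ≫ T.s) := by rw [T.id, Category.comp_id]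
    _ = offDiag S T φ ≫ Y.f + (S.s ≫ φ.τ₂ ≫ Y.g) ≫ T.s := by
        simp only [offDiag, Preadditive.comp_add, Category.assoc]
    _ = offDiag S T φ ≫ Y.f + φ.τ₃ ≫ T.s := by rw [h]

theorem hom_ext_of_offDiag (S : X.Splitting) (T : Y.Splitting) {φ ψ : X ⟶ Y}
    (h₁ : φ.τ₁ = ψ.τ₁) (h₃ : φ.τ₃ = ψ.τ₃) (h : offDiag S T φ = offDiag S T ψ) : φ = ψ := by
  refine ShortComplex.hom_ext _ _ h₁ ?_ h₃
  rw [← Category.id_comp φ.τ₂, ← Category.id_comp ψ.τ₂, ← S.id]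
  simp only [Preadditive.add_comp, Category.assoc, ← φ.comm₁₂, ← ψ.comm₁₂, section_comp S T, h₁,
    h₃, h]

theorem offDiag_comp (S : X.Splitting) (T : Y.Splitting) (U : Z.Splitting) (φ : X ⟶ Y)
    (ψ : Y ⟶ Z) :
    offDiag S U (φ ≫ ψ) = offDiag S T φ ≫ ψ.τ₁ + φ.τ₃ ≫ offDiag T U ψ := by
  have h : Y.f ≫ ψ.τ₂ ≫ U.r = ψ.τ₁ := by rw [← ψ.comm₁₂_assoc, U.f_r, Category.comp_id]
  calc offDiag S U (φ ≫ ψ) = (S.s ≫ φ.τ₂) ≫ ψ.τ₂ ≫ U.r := by simp [offDiag]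
    _ = offDiag S T φ ≫ Y.f ≫ ψ.τ₂ ≫ U.r + φ.τ₃ ≫ T.s ≫ ψ.τ₂ ≫ U.r := by
        rw [section_comp S T, Preadditive.add_comp, Category.assoc, Category.assoc]
    _ = offDiag S T φ ≫ ψ.τ₁ + φ.τ₃ ≫ offDiag T U ψ := by rw [h]; rfl

@[simp]
theorem offDiag_id (S : X.Splitting) : offDiag S S (𝟙 X) = 0 := by
  simp [offDiag, S.s_r]

@[simp]
theorem offDiag_zero (S : X.Splitting) (T : Y.Splitting) : offDiag S T 0 = 0 := by
  simp [offDiag]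

/-- The morphism of split short complexes with diagonal entries `a`, `b` and off-diagonal
entry `c`. -/
@[simps τ₁ τ₃]
def triangularHom (S : X.Splitting) (T : Y.Splitting) (a : X.X₁ ⟶ Y.X₁) (b : X.X₃ ⟶ Y.X₃)
    (c : X.X₃ ⟶ Y.X₁) : X ⟶ Y where
  τ₁ := a
  τ₂ := S.r ≫ a ≫ Y.f + X.g ≫ (c ≫ Y.f + b ≫ T.s)
  τ₃ := b
  comm₁₂ := by simp
  comm₂₃ := by simp

@[simp]
theorem offDiag_triangularHom (S : X.Splitting) (T : Y.Splitting) (a : X.X₁ ⟶ Y.X₁)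
    (b : X.X₃ ⟶ Y.X₃) (c : X.X₃ ⟶ Y.X₁) : offDiag S T (triangularHom S T a b c) = c := by
  simp [offDiag, triangularHom, S.s_r_assoc, T.s_r]

/-- An upper triangular morphism with invertible diagonal entries is an isomorphism. -/
@[simps hom]
def triangularIso (S : X.Splitting) (T : Y.Splitting) (a : X.X₁ ≅ Y.X₁) (b : X.X₃ ≅ Y.X₃)
    (c : X.X₃ ⟶ Y.X₁) : X ≅ Y where
  hom := triangularHom S T a.hom b.hom c
  inv := triangularHom T S a.inv b.inv (-(b.inv ≫ c ≫ a.inv))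
  hom_inv_id := hom_ext_of_offDiag S S (by simp) (by simp) (by simp [offDiag_comp S T S])
  inv_hom_id := hom_ext_of_offDiag T T (by simp) (by simp) (by simp [offDiag_comp T S T])

end SplitMorphisms

namespace Z2Cx

variable {C : Type u} [SmallCategory C] [Abelian C] {L M N : Z2Cx C}

/-- An isomorphism of `ℤ/2`-graded complexes, given degreewise. -/
def isoMk (e₀ : M.X0 ≅ N.X0) (e₁ : M.X1 ≅ N.X1) (comm0 : M.d0 ≫ e₁.hom = e₀.hom ≫ N.d0)
    (comm1 : M.d1 ≫ e₀.hom = e₁.hom ≫ N.d1) : M ≅ N where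
  hom := Hom.mk e₀.hom e₁.hom comm0 comm1
  inv := Hom.mk e₀.inv e₁.inv (by rw [Iso.eq_inv_comp, ← Category.assoc, ← comm0]; simp)
    (by rw [Iso.eq_inv_comp, ← Category.assoc, ← comm1]; simp)
  hom_inv_id := Hom.ext e₀.hom_inv_id e₁.hom_inv_id
  inv_hom_id := Hom.ext e₀.inv_hom_id e₁.inv_hom_id

section HomComplex

variable (M N)

/-- The even part of the `ℤ/2`-graded complex `Hom(M•, N•)`. -/
abbrev EvenCochain := (M.X0 ⟶ N.X0) × (M.X1 ⟶ N.X1)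

/-- The odd part of the `ℤ/2`-graded complex `Hom(M•, N•)`. -/
abbrev OddCochain := (M.X0 ⟶ N.X1) × (M.X1 ⟶ N.X0)

/-- The differential of `Hom(M•, N•)` on even cochains: the graded commutator with `d`. -/
@[simps!]
def evenDifferential : EvenCochain M N →+ OddCochain M N :=
  AddMonoidHom.mk' (fun h => (h.1 ≫ N.d0 - M.d0 ≫ h.2, h.2 ≫ N.d1 - M.d1 ≫ h.1)) fun h h' => by
    ext <;> simp only [Prod.fst_add, Prod.snd_add, Preadditive.add_comp, Preadditive.comp_add] <;>
      abel

/-- The differential of `Hom(M•, N•)` on odd cochains: the graded commutator with `d`. -/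
@[simps!]
def oddDifferential : OddCochain M N →+ EvenCochain M N :=
  AddMonoidHom.mk' (fun x => (x.1 ≫ N.d1 + M.d0 ≫ x.2, x.2 ≫ N.d0 + M.d1 ≫ x.1)) fun x x' => by
    ext <;> simp only [Prod.fst_add, Prod.snd_add, Preadditive.add_comp, Preadditive.comp_add] <;>
      abel

theorem oddDifferential_evenDifferential (h : EvenCochain M N) :
    oddDifferential M N (evenDifferential M N h) = 0 := by
  ext <;> simp [N.d01, N.d10, reassoc_of% M.d01, reassoc_of% M.d10]

/-- The odd cohomology group of `Hom(M•, N•)`, i.e. the group of homotopy classes of maps from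
`M•` to the shift of `N•`, is finite. -/
def FiniteOddCohomology : Prop :=
  (evenDifferential M N).range.IsFiniteRelIndex (oddDifferential M N).ker

variable {M N}

/-- Precomposition of even cochains with a morphism of complexes. -/
@[simps!]
def evenPrecomp (f : M ⟶ N) (L : Z2Cx C) : EvenCochain N L →+ EvenCochain M L :=
  AddMonoidHom.mk' (fun h => (Hom.f0 f ≫ h.1, Hom.f1 f ≫ h.2)) fun _ _ => by ext <;> simp

/-- Precomposition of odd cochains with a morphism of complexes. -/
@[simps!]
def oddPrecomp (f : M ⟶ N) (L : Z2Cx C) : OddCochain N L →+ OddCochain M L :=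
  AddMonoidHom.mk' (fun x => (Hom.f0 f ≫ x.1, Hom.f1 f ≫ x.2)) fun _ _ => by ext <;> simp

theorem evenDifferential_evenPrecomp (f : M ⟶ N) (h : EvenCochain N L) :
    evenDifferential M L (evenPrecomp f L h) = oddPrecomp f L (evenDifferential N L h) := by
  ext <;> simp [← reassoc_of% f.comm0, ← reassoc_of% f.comm1]

theorem oddDifferential_oddPrecomp (f : M ⟶ N) (x : OddCochain N L) :
    oddDifferential M L (oddPrecomp f L x) = evenPrecomp f L (oddDifferential N L x) := by
  ext <;> simp [← reassoc_of% f.comm0, ← reassoc_of% f.comm1]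

end HomComplex

namespace ExtSES

/-- The degree `0` part of an extension. -/
abbrev deg0 (s : ExtSES M N) : ShortComplex C := ShortComplex.mk _ _ s.w0

/-- The degree `1` part of an extension. -/
abbrev deg1 (s : ExtSES M N) : ShortComplex C := ShortComplex.mk _ _ s.w1

/-- The differential of an extension out of degree `0`. -/
@[simps]
def d0 (s : ExtSES M N) : s.deg0 ⟶ s.deg1 where
  τ₁ := N.d0
  τ₂ := s.E.d0
  τ₃ := M.d0
  comm₁₂ := s.i.comm0
  comm₂₃ := s.p.comm0

/-- The differential of an extension out of degree `1`. -/
@[simps]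
def d1 (s : ExtSES M N) : s.deg1 ⟶ s.deg0 where
  τ₁ := N.d1
  τ₂ := s.E.d1
  τ₃ := M.d1
  comm₁₂ := s.i.comm1
  comm₂₃ := s.p.comm1

theorem d0_comp_d1 (s : ExtSES M N) : s.d0 ≫ s.d1 = 0 :=
  ShortComplex.hom_ext _ _ N.d01 s.E.d01 M.d01

theorem d1_comp_d0 (s : ExtSES M N) : s.d1 ≫ s.d0 = 0 :=
  ShortComplex.hom_ext _ _ N.d10 s.E.d10 M.d10

/-- A splitting of the underlying extension of graded objects. -/
structure DegreewiseSplitting (s : ExtSES M N) where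
  sp0 : s.deg0.Splitting
  sp1 : s.deg1.Splitting

namespace DegreewiseSplitting

/-- Extensions of degreewise projective complexes split degreewise. -/
def ofProjective (s : ExtSES M N) [Projective M.X0] [Projective M.X1] :
    DegreewiseSplitting s :=
  have : Projective s.deg0.X₃ := ‹Projective M.X0›
  have : Projective s.deg1.X₃ := ‹Projective M.X1›
  ⟨s.ex0.splittingOfProjective, s.ex1.splittingOfProjective⟩

variable {s t : ExtSES M N}

/-- The odd cochain classifying a degreewise split extension: the off-diagonal entries of its
differentials. -/
@[simps]
def twist (S : DegreewiseSplitting s) : OddCochain M N :=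
  (offDiag S.sp0 S.sp1 s.d0, offDiag S.sp1 S.sp0 s.d1)

theorem twist_mem_ker (S : DegreewiseSplitting s) : S.twist ∈ (oddDifferential M N).ker := by
  have h₀ := offDiag_comp S.sp0 S.sp1 S.sp0 s.d0 s.d1
  have h₁ := offDiag_comp S.sp1 S.sp0 S.sp1 s.d1 s.d0
  rw [s.d0_comp_d1, offDiag_zero] at h₀
  rw [s.d1_comp_d0, offDiag_zero] at h₁
  exact Prod.ext h₀.symm h₁.symm

theorem extEquiv_of_twist_sub_mem_range (S : DegreewiseSplitting s) (T : DegreewiseSplitting t)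
    (hST : S.twist - T.twist ∈ (evenDifferential M N).range) : ExtEquiv M N s t := by
  obtain ⟨⟨h, g⟩, hhg⟩ := hST
  let φ₀ : s.deg0 ≅ t.deg0 := triangularIso S.sp0 T.sp0 (Iso.refl _) (Iso.refl _) h
  let φ₁ : s.deg1 ≅ t.deg1 := triangularIso S.sp1 T.sp1 (Iso.refl _) (Iso.refl _) g
  have comm0 : s.d0 ≫ φ₁.hom = φ₀.hom ≫ t.d0 := by
    refine hom_ext_of_offDiag S.sp0 T.sp1 (by simp [φ₀, φ₁]) (by simp [φ₀, φ₁]) ?_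
    have key : h ≫ N.d0 - M.d0 ≫ g = S.twist.1 - T.twist.1 := congrArg Prod.fst hhg
    rw [offDiag_comp S.sp0 S.sp1 T.sp1, offDiag_comp S.sp0 T.sp0 T.sp1]
    simpa [φ₀, φ₁, add_comm] using (sub_eq_sub_iff_add_eq_add.mp key).symm
  have comm1 : s.d1 ≫ φ₀.hom = φ₁.hom ≫ t.d1 := by
    refine hom_ext_of_offDiag S.sp1 T.sp0 (by simp [φ₀, φ₁]) (by simp [φ₀, φ₁]) ?_
    have key : g ≫ N.d1 - M.d1 ≫ h = S.twist.2 - T.twist.2 := congrArg Prod.snd hhg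
    rw [offDiag_comp S.sp1 S.sp0 T.sp0, offDiag_comp S.sp1 T.sp1 T.sp0]
    simpa [φ₀, φ₁, add_comm] using (sub_eq_sub_iff_add_eq_add.mp key).symm
  exact ⟨isoMk (ShortComplex.π₂.mapIso φ₀) (ShortComplex.π₂.mapIso φ₁)
      (congrArg ShortComplex.Hom.τ₂ comm0) (congrArg ShortComplex.Hom.τ₂ comm1),
    Hom.ext (φ₀.hom.comm₁₂.symm.trans (Category.id_comp _))
      (φ₁.hom.comm₁₂.symm.trans (Category.id_comp _)),
    Hom.ext (φ₀.hom.comm₂₃.trans (Category.comp_id _))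
      (φ₁.hom.comm₂₃.trans (Category.comp_id _))⟩

end DegreewiseSplitting

end ExtSES

theorem finite_extCl (S : ∀ s : ExtSES M N, s.DegreewiseSplitting)
    (h : FiniteOddCohomology M N) : Finite (ExtCl M N) := by
  let B := (evenDifferential M N).range.addSubgroupOf (oddDifferential M N).ker
  have : B.FiniteIndex := AddSubgroup.isFiniteRelIndex_iff_finiteIndex.mp h
  have : Finite ((oddDifferential M N).ker ⧸ B) := AddSubgroup.finite_quotient_of_finiteIndex
  let cls (s : ExtSES M N) : (oddDifferential M N).ker ⧸ B :=
    QuotientAddGroup.mk ⟨_, (S s).twist_mem_ker⟩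
  refine Finite.of_injective (fun ε : ExtCl M N => cls ε.out) fun ε ε' hε => ?_
  rw [← Quot.out_eq ε, ← Quot.out_eq ε']
  exact Quot.sound ((S _).extEquiv_of_twist_sub_mem_range (S _)
    (AddSubgroup.mem_addSubgroupOf.mp (QuotientAddGroup.eq_iff_sub_mem.mp hε)))

namespace ExtSES

theorem evenPrecomp_p_injective (s : ExtSES M N) : Function.Injective (evenPrecomp s.p L) := by
  have : Epi (Hom.f0 s.p) := s.ex0.epi_g
  have : Epi (Hom.f1 s.p) := s.ex1.epi_g
  exact fun h h' eq => Prod.ext ((cancel_epi _).mp (congrArg Prod.fst eq))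
    ((cancel_epi _).mp (congrArg Prod.snd eq))

theorem ker_oddPrecomp_i_le (s : ExtSES M N) :
    (oddPrecomp s.i L).ker ≤ (oddPrecomp s.p L).range := by
  have : Epi s.deg0.g := s.ex0.epi_g
  have : Epi s.deg1.g := s.ex1.epi_g
  exact fun x hx =>
    ⟨(s.ex0.exact.desc x.1 (congrArg Prod.fst hx), s.ex1.exact.desc x.2 (congrArg Prod.snd hx)),
      Prod.ext (s.ex0.exact.g_desc _ _) (s.ex1.exact.g_desc _ _)⟩

theorem DegreewiseSplitting.evenPrecomp_i_surjective {s : ExtSES M N}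
    (S : s.DegreewiseSplitting) : Function.Surjective (evenPrecomp s.i L) := fun h =>
  ⟨(S.sp0.r ≫ h.1, S.sp1.r ≫ h.2), Prod.ext (S.sp0.f_r_assoc _) (S.sp1.f_r_assoc _)⟩

end ExtSES

theorem finiteOddCohomology_of_splitting {s : ExtSES M N} (S : s.DegreewiseSplitting)
    (hM : FiniteOddCohomology M L) (hN : FiniteOddCohomology N L) :
    FiniteOddCohomology s.E L := by
  refine isFiniteRelIndex_of_exact (oddPrecomp s.p L) (oddPrecomp s.i L) ?_ ?_ ?_ hM hN
  · rintro _ ⟨_, ⟨h, rfl⟩, rfl⟩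
    exact ⟨evenPrecomp s.p L h, evenDifferential_evenPrecomp s.p h⟩
  · rintro _ ⟨x, hx, rfl⟩
    rw [AddMonoidHom.mem_ker, oddDifferential_oddPrecomp, AddMonoidHom.mem_ker.mp hx, map_zero]
  · rintro x ⟨hx, h, hh⟩
    obtain ⟨h, rfl⟩ := S.evenPrecomp_i_surjective h
    obtain ⟨z, hz⟩ : x - evenDifferential s.E L h ∈ (oddPrecomp s.p L).range :=
      s.ker_oddPrecomp_i_le <| by
        rw [AddMonoidHom.mem_ker, map_sub, ← evenDifferential_evenPrecomp, hh, sub_self]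
    have z_mem_ker : z ∈ (oddDifferential M L).ker := s.evenPrecomp_p_injective <| by
      rw [← oddDifferential_oddPrecomp, hz, map_sub, oddDifferential_evenDifferential,
        AddMonoidHom.mem_ker.mp hx, sub_zero, map_zero]
    rw [← sub_add_cancel x (evenDifferential s.E L h), ← hz]
    exact AddSubgroup.add_mem_sup ⟨z, z_mem_ker, rfl⟩ ⟨h, rfl⟩

theorem finiteOddCohomology_of_differential_eq_zero [Projective M.X0] [Projective M.X1]
    (h0 : M.d0 = 0) (h1 : M.d1 = 0) [Finite (M.X0 ⟶ H1 C N)] [Finite (M.X1 ⟶ H0 C N)] :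
    FiniteOddCohomology M N := by
  have : Finite (M.X0 ⟶ (ShortComplex.mk N.d0 N.d1 N.d01).homology) := ‹Finite (_ ⟶ H1 C N)›
  have : Finite (M.X1 ⟶ (ShortComplex.mk N.d1 N.d0 N.d10).homology) := ‹Finite (_ ⟶ H0 C N)›
  have finite_prod := isFiniteRelIndex_prod
    (isFiniteRelIndex_range_rightComp M.X0 (ShortComplex.mk N.d0 N.d1 N.d01))
    (isFiniteRelIndex_range_rightComp M.X1 (ShortComplex.mk N.d1 N.d0 N.d10))
  have ker_le : (oddDifferential M N).ker ≤
      (Preadditive.rightComp M.X0 N.d1).ker.prod (Preadditive.rightComp M.X1 N.d0).ker := by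
    intro x hx
    have d_fst : x.1 ≫ N.d1 + M.d0 ≫ x.2 = 0 := congrArg Prod.fst hx
    have d_snd : x.2 ≫ N.d0 + M.d1 ≫ x.1 = 0 := congrArg Prod.snd hx
    rw [h0, zero_comp, add_zero] at d_fst
    rw [h1, zero_comp, add_zero] at d_snd
    exact ⟨d_fst, d_snd⟩
  have le_range : (Preadditive.rightComp M.X0 N.d0).range.prod
      (Preadditive.rightComp M.X1 N.d1).range ≤ (evenDifferential M N).range := by
    rintro ⟨_, _⟩ ⟨⟨h, rfl⟩, ⟨g, rfl⟩⟩
    refine ⟨(h, g), Prod.ext ?_ ?_⟩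
    · change h ≫ N.d0 - M.d0 ≫ g = h ≫ N.d0
      rw [h0, zero_comp, sub_zero]
    · change g ≫ N.d1 - M.d1 ≫ h = g ≫ N.d1
      rw [h1, zero_comp, sub_zero]
  have := AddSubgroup.isFiniteRelIndex_of_le_right ((Preadditive.rightComp M.X0 N.d0).range.prod
    (Preadditive.rightComp M.X1 N.d1).range) ker_le
  exact AddSubgroup.isFiniteRelIndex_of_le_left _ le_range

variable (M) in
/-- The complex of cycles of `M•`, with zero differentials. -/
def cyclesCx : Z2Cx C := ⟨kernel M.d0, kernel M.d1, 0, 0, by simp, by simp⟩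

variable (M) in
/-- The complex of boundaries of `M•` with zero differentials, shifted so that `M•` maps onto
it. -/
def boundariesCx : Z2Cx C := ⟨image M.d0, image M.d1, 0, 0, by simp, by simp⟩

variable (M) in
/-- `M•` as an extension of its complex of boundaries by its complex of cycles. -/
def cyclesBoundariesSES : ExtSES (boundariesCx M) (cyclesCx M) where
  E := M
  i := Hom.mk (kernel.ι M.d0) (kernel.ι M.d1)
    (zero_comp.trans (kernel.condition M.d0).symm) (zero_comp.trans (kernel.condition M.d1).symm)
  p := Hom.mk (factorThruImage M.d0) (factorThruImage M.d1)
    ((comp_factorThruImage_eq_zero M.d01).trans comp_zero.symm)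
    ((comp_factorThruImage_eq_zero M.d10).trans comp_zero.symm)
  w0 := _
  w1 := _
  ex0 := shortExact_kernel_image M.d0
  ex1 := shortExact_kernel_image M.d1

theorem finiteOddCohomology_boundariesCx [Projective (image M.d0)] [Projective (image M.d1)]
    [Finite (M.X0 ⟶ H1 C N)] [Finite (M.X1 ⟶ H0 C N)] :
    FiniteOddCohomology (boundariesCx M) N := by
  have : Projective (boundariesCx M).X0 := ‹Projective (image M.d0)›
  have : Projective (boundariesCx M).X1 := ‹Projective (image M.d1)›
  have : Finite ((boundariesCx M).X0 ⟶ H1 C N) := finite_hom_of_epi (factorThruImage M.d0) _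
  have : Finite ((boundariesCx M).X1 ⟶ H0 C N) := finite_hom_of_epi (factorThruImage M.d1) _
  exact finiteOddCohomology_of_differential_eq_zero rfl rfl

theorem finiteOddCohomology_cyclesCx (S : (cyclesBoundariesSES M).DegreewiseSplitting)
    [Projective M.X0] [Projective M.X1] [Finite (M.X0 ⟶ H1 C N)] [Finite (M.X1 ⟶ H0 C N)] :
    FiniteOddCohomology (cyclesCx M) N := by
  have r₀ : Retract (cyclesCx M).X0 M.X0 := ⟨kernel.ι M.d0, S.sp0.r, S.sp0.f_r⟩
  have r₁ : Retract (cyclesCx M).X1 M.X1 := ⟨kernel.ι M.d1, S.sp1.r, S.sp1.f_r⟩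
  have := r₀.projective
  have := r₁.projective
  have : Finite ((cyclesCx M).X0 ⟶ H1 C N) := finite_hom_of_epi r₀.r _
  have : Finite ((cyclesCx M).X1 ⟶ H0 C N) := finite_hom_of_epi r₁.r _
  exact finiteOddCohomology_of_differential_eq_zero rfl rfl

end Z2Cx

theorem stmt9_general {C : Type u} [SmallCategory C] [Abelian C] (M N : Z2Cx C)
    [Projective M.X0] [Projective M.X1] [Projective (image M.d0)]
    [Projective (image M.d1)] [Finite (M.X0 ⟶ H1 C N)] [Finite (M.X1 ⟶ H0 C N)] :
    Finite (ExtCl M N) := by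
  have : Projective (boundariesCx M).X0 := ‹Projective (image M.d0)›
  have : Projective (boundariesCx M).X1 := ‹Projective (image M.d1)›
  let S := ExtSES.DegreewiseSplitting.ofProjective (cyclesBoundariesSES M)
  exact finite_extCl (fun s => .ofProjective s) (finiteOddCohomology_of_splitting S
    finiteOddCohomology_boundariesCx (finiteOddCohomology_cyclesCx S))

theorem stmt9 (hH : Hereditary k R) (hc : CondC R) (hd : CondD R) (he : CondE R)
    (M N : Z2Cx R) (hM : FinCx R M) (hN : FinCx R N) :
    Finite (ExtCl M N) := by
  obtain ⟨_, _, -, -⟩ := hM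
  have := hH.projective_of_mono (image.ι M.d0)
  have := hH.projective_of_mono (image.ι M.d1)
  have := hN.2.2.2 M.X0
  have := hN.2.2.1 M.X1
  exact stmt9_general M N

end
end

section
/- For any projective object P ∈ P and any complex M• ∈ C_fin(P), the following identities hold in the Hall algebra H(C_fin(P)): [K_P] ⋆ [M•] = v^{⟨[P],[M•]⟩} [K_P ⊕ M•] and [M•] ⋆ [K_P] = v^{−⟨[M•],[P]⟩} [K_P ⊕ M•], where [M•] = [M₀] − [M₁] ∈ K(R). -/
open CategoryTheory CategoryTheory.Limits Opposite

noncomputable section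

universe u

variable (k : Type) [Field k] [Fintype k]
variable (R : Type u) [SmallCategory R] [Abelian R] [Linear k R] [EnoughProjectives R]

attribute [local instance] Classical.propDecidable

/-- The class `[M•] = [M₀] - [M₁]` in `K(R)` of a `ℤ/2`-graded complex. -/
def clsOf (M : Z2Cx R) : K0 R := K0.cls R M.X0 - K0.cls R M.X1

/-- Isomorphism of `ℤ/2`-graded complexes, as a relation. -/
def cxRel (M N : Z2Cx R) : Prop := Nonempty (M ≅ N)

/-- Isomorphism classes of `ℤ/2`-graded complexes. -/
def CxCls := Quot (cxRel R)

/-- The isomorphism class of a complex. -/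
def ccls (M : Z2Cx R) : CxCls R := Quot.mk _ M

/-- The isomorphism class of the middle term of an extension class. -/
def extMid {M N : Z2Cx R} : Z2Cx.ExtCl M N → CxCls R :=
  Quot.lift (fun s => ccls R s.E) (fun s t h => by
    obtain ⟨φ, -, -⟩ := h
    exact Quot.sound ⟨φ⟩)

/-- `|Ext¹_{C(R)}(M•,N•)_{P•}|` : the number of extension classes of `M•` by `N•` whose
middle term has isomorphism class `c`. -/
def extCount (M N : Z2Cx R) (c : CxCls R) : ℕ :=
  Nat.card {x : Z2Cx.ExtCl M N // extMid R x = c}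

/-- The `ℚ`-valued extension of the Euler form to `K(R) × K(R)`
(which exists by condition (d)). -/
structure EulerData where
  eQ : K0 R →+ K0 R →+ ℚ
  compat : ∀ (M A : R), IsFinHom R A →
    eQ (K0.cls R M) (K0.cls R A) = euler k R M A

/-- A choice, for every complex of projectives `M•`, of the classes `[M₁⁺]` and `[M₀⁻]`
of the components of the canonical decomposition `M• = M•⁺ ⊕ M•⁻ = C_f ⊕ C_g^†`. -/
structure DecData where
  cplus : Z2Cx R → K0 R
  cminus : Z2Cx R → K0 R
  spec : ∀ M : Z2Cx R, Projective M.X0 → Projective M.X1 →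
    ∃ (P Q P' Q' : R) (f : P ⟶ Q) (g : P' ⟶ Q'),
      Projective P ∧ Projective Q ∧ Projective P' ∧ Projective Q' ∧
      Mono f ∧ Mono g ∧
      Nonempty (M ≅ Z2Cx.dsum R (Z2Cx.Cf R f) (Z2Cx.dagger R (Z2Cx.Cf R g))) ∧
      cplus M = K0.cls R P ∧ cminus M = K0.cls R P'

variable {k R}

/-- `μ(M•,N•) = Σ_{i,j} ⟨[Mᵢ^{ε(j)}], [N_{j+1}^{ε(i)}]⟩`. -/
def mu (ed : EulerData k R) (dd : DecData R) (M N : Z2Cx R) : ℚ :=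
  ed.eQ (K0.cls R M.X0 - dd.cminus M) (dd.cplus N) +
    ed.eQ (dd.cplus M) (K0.cls R N.X1 - dd.cplus N) +
    ed.eQ (dd.cminus M) (K0.cls R N.X0 - dd.cminus N) +
    ed.eQ (K0.cls R M.X1 - dd.cplus M) (dd.cminus N)

/-- `h(M•,N•) = q^{μ(M•,N•)} ⬝ |Hom_{C(R)}(H•(M•), H•(N•))|`. -/
def hVal (ed : EulerData k R) (dd : DecData R) (M N : Z2Cx R) : ℝ :=
  (Fintype.card k : ℝ) ^ ((mu ed dd M N : ℚ) : ℝ) *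
    (Nat.card (Z2Cx.Hcx R M ⟶ Z2Cx.Hcx R N) : ℝ)

/-- The structure constants of the Hall algebra `H(C_fin(P))`:
the coefficient of the basis element `c` in `[M•] ⋆ [N•]`. -/
def hallCoeff (v : ℝ) (ed : EulerData k R) (dd : DecData R) (M N : Z2Cx R)
    (c : CxCls R) : ℂ :=
  (((v ^ (((ed.eQ (K0.cls R M.X0) (K0.cls R N.X0) +
      ed.eQ (K0.cls R M.X1) (K0.cls R N.X1) : ℚ)) : ℝ) *
    (extCount R M N c : ℝ) / hVal ed dd M N : ℝ)) : ℂ)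

open Z2Cx

/-!
Every complex `N` satisfies `Hom(K_P, N) = Hom(P, N₁)` and `Hom(N, K_P) = Hom(N₀, P)`. Hence a
section of the degree `1` part of an extension of `K_P`, or a retraction of the degree `0` part of
an extension by `K_P`, comes from a splitting of complexes, and projectivity makes every such
extension split. As moreover `K_P` is acyclic, each product in question is the single term
`v ^ (⟨[M₀],[N₀]⟩ + ⟨[M₁],[N₁]⟩ - 2 μ(M,N)) [M ⊕ N]`. Finally `K_P⁺ = K_P` because `d₁` is
injective, so `μ(K_P, M) = ⟨[P],[M₁]⟩` and `μ(M, K_P) = ⟨[M₀],[P]⟩`.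
-/

lemma isIso_of_shortExact_of_comp_eq {C : Type*} [Category C] [Abelian C] {A B E E' : C}
    {i : A ⟶ E} {p : E ⟶ B} {i' : A ⟶ E'} {p' : E' ⟶ B} {w : i ≫ p = 0} {w' : i' ≫ p' = 0}
    (h : (ShortComplex.mk i p w).ShortExact) (h' : (ShortComplex.mk i' p' w').ShortExact)
    (f : E ⟶ E') (hi : i ≫ f = i') (hp : f ≫ p' = p) : IsIso f := by
  let φ : ShortComplex.mk i p w ⟶ ShortComplex.mk i' p' w' :=
    { τ₁ := 𝟙 A, τ₂ := f, τ₃ := 𝟙 B, comm₁₂ := by simp [hi], comm₂₃ := by simp [hp] }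
  have : IsIso φ.τ₁ := inferInstanceAs (IsIso (𝟙 A))
  have : IsIso φ.τ₃ := inferInstanceAs (IsIso (𝟙 B))
  exact ShortComplex.isIso₂_of_shortExact_of_isIso₁₃ φ h h'

section

omit [EnoughProjectives R]

namespace K0

lemma cls_of_shortExact {S : ShortComplex R} (hS : S.ShortExact) :
    cls R S.X₂ = cls R S.X₁ + cls R S.X₃ := by
  have hrel : cls R S.X₂ - cls R S.X₁ - cls R S.X₃ = 0 :=
    (QuotientAddGroup.eq_zero_iff _).2 (AddSubgroup.subset_closure ⟨S, hS, rfl⟩)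
  rwa [sub_sub, sub_eq_zero] at hrel

lemma cls_of_isZero {Z : R} (hZ : IsZero Z) : cls R Z = 0 := by
  have hses : (ShortComplex.mk (0 : Z ⟶ Z) (0 : Z ⟶ Z) zero_comp).ShortExact :=
    { exact := ShortComplex.exact_of_isZero_X₂ _ hZ
      mono_f := ⟨fun _ _ _ => hZ.eq_of_tgt _ _⟩
      epi_g := ⟨fun _ _ _ => hZ.eq_of_src _ _⟩ }
  exact left_eq_add.1 (cls_of_shortExact hses)

open ZeroObject in
lemma cls_congr {X Y : R} (e : X ≅ Y) : cls R X = cls R Y := by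
  have hses : (ShortComplex.mk e.hom (0 : Y ⟶ (0 : R)) comp_zero).ShortExact :=
    { exact := (ShortComplex.exact_iff_epi _ rfl).2 (inferInstanceAs (Epi e.hom))
      mono_f := inferInstanceAs (Mono e.hom)
      epi_g := ⟨fun _ _ _ => (isZero_zero R).eq_of_src _ _⟩ }
  simpa only [cls_of_isZero (isZero_zero R), add_zero] using (cls_of_shortExact hses).symm

end K0

namespace Z2Cx

/-! ### Morphisms of complexes -/

lemma Hom.d0_comp_f1 {M N : Z2Cx R} (f : M ⟶ N) : M.d0 ≫ Hom.f1 f = Hom.f0 f ≫ N.d0 :=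
  Hom.comm0 f

lemma Hom.d1_comp_f0 {M N : Z2Cx R} (f : M ⟶ N) : M.d1 ≫ Hom.f0 f = Hom.f1 f ≫ N.d1 :=
  Hom.comm1 f

/-- The degree `1` component of an isomorphism of complexes. -/
def isoX1 {M N : Z2Cx R} (e : M ≅ N) : M.X1 ≅ N.X1 where
  hom := Hom.f1 e.hom
  inv := Hom.f1 e.inv
  hom_inv_id := congrArg Hom.f1 e.hom_inv_id
  inv_hom_id := congrArg Hom.f1 e.inv_hom_id

/-- A morphism of complexes that is an isomorphism in both degrees, as an isomorphism. -/
def isoOfComponents {M N : Z2Cx R} (f : M ⟶ N) [IsIso (Hom.f0 f)] [IsIso (Hom.f1 f)] :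
    M ≅ N where
  hom := f
  inv :=
    { f0 := inv (Hom.f0 f)
      f1 := inv (Hom.f1 f)
      comm0 := by
        rw [IsIso.comp_inv_eq, Category.assoc, Hom.d0_comp_f1, IsIso.inv_hom_id_assoc]
      comm1 := by
        rw [IsIso.comp_inv_eq, Category.assoc, Hom.d1_comp_f0, IsIso.inv_hom_id_assoc] }
  hom_inv_id := Hom.ext (IsIso.hom_inv_id (Hom.f0 f)) (IsIso.hom_inv_id (Hom.f1 f))
  inv_hom_id := Hom.ext (IsIso.inv_hom_id (Hom.f0 f)) (IsIso.inv_hom_id (Hom.f1 f))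

@[simp] lemma KP_X0 (P : R) : (KP R P).X0 = P := rfl
@[simp] lemma KP_X1 (P : R) : (KP R P).X1 = P := rfl

/-- Morphisms `K_P ⟶ M` are determined by an arbitrary morphism `P ⟶ M₁`. -/
def homFromKPEquiv (P : R) (M : Z2Cx R) : (KP R P ⟶ M) ≃ (P ⟶ M.X1) where
  toFun f := Hom.f1 f
  invFun g := ⟨g ≫ M.d1, g, by simp [KP, M.d10], by simp [KP]⟩
  left_inv f := Hom.ext ((Hom.d1_comp_f0 f).symm.trans (Category.id_comp _)) rfl
  right_inv _ := rfl

/-- Morphisms `M ⟶ K_P` are determined by an arbitrary morphism `M₀ ⟶ P`. -/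
def homToKPEquiv (P : R) (M : Z2Cx R) : (M ⟶ KP R P) ≃ (M.X0 ⟶ P) where
  toFun f := Hom.f0 f
  invFun g := ⟨g, M.d1 ≫ g, by simp [KP, reassoc_of% M.d01], by simp [KP]⟩
  left_inv f := Hom.ext rfl ((Hom.d1_comp_f0 f).trans (Category.comp_id _))
  right_inv _ := rfl

/-! ### Split extensions -/

lemma ExtEquiv.of_hom {M N : Z2Cx R} {s t : ExtSES M N} (f : s.E ⟶ t.E) (hi : s.i ≫ f = t.i)
    (hp : f ≫ t.p = s.p) : ExtEquiv M N s t := by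
  have : IsIso (Hom.f0 f) :=
    isIso_of_shortExact_of_comp_eq s.ex0 t.ex0 _ (congrArg Hom.f0 hi) (congrArg Hom.f0 hp)
  have : IsIso (Hom.f1 f) :=
    isIso_of_shortExact_of_comp_eq s.ex1 t.ex1 _ (congrArg Hom.f1 hi) (congrArg Hom.f1 hp)
  exact ⟨isoOfComponents f, hi, hp⟩

/-- The morphism out of a direct sum of complexes with given restrictions to the summands. -/
def dsumDesc {M N E : Z2Cx R} (f : M ⟶ E) (g : N ⟶ E) : dsum R M N ⟶ E where
  f0 := biprod.desc (Hom.f0 f) (Hom.f0 g)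
  f1 := biprod.desc (Hom.f1 f) (Hom.f1 g)
  comm0 := show biprod.map M.d0 N.d0 ≫ biprod.desc (Hom.f1 f) (Hom.f1 g) =
      biprod.desc (Hom.f0 f) (Hom.f0 g) ≫ E.d0 by
    apply biprod.hom_ext' <;> simp [Hom.d0_comp_f1]
  comm1 := show biprod.map M.d1 N.d1 ≫ biprod.desc (Hom.f0 f) (Hom.f0 g) =
      biprod.desc (Hom.f1 f) (Hom.f1 g) ≫ E.d1 by
    apply biprod.hom_ext' <;> simp [Hom.d1_comp_f0]

/-- The morphism into a direct sum of complexes with given components. -/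
def dsumLift {M N E : Z2Cx R} (f : E ⟶ M) (g : E ⟶ N) : E ⟶ dsum R M N where
  f0 := biprod.lift (Hom.f0 f) (Hom.f0 g)
  f1 := biprod.lift (Hom.f1 f) (Hom.f1 g)
  comm0 := show E.d0 ≫ biprod.lift (Hom.f1 f) (Hom.f1 g) =
      biprod.lift (Hom.f0 f) (Hom.f0 g) ≫ biprod.map M.d0 N.d0 by
    apply biprod.hom_ext <;> simp [Hom.d0_comp_f1]
  comm1 := show E.d1 ≫ biprod.lift (Hom.f0 f) (Hom.f0 g) =
      biprod.lift (Hom.f1 f) (Hom.f1 g) ≫ biprod.map M.d1 N.d1 by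
    apply biprod.hom_ext <;> simp [Hom.d1_comp_f0]

/-- The split extension of `M` by `N`, with middle term `N ⊕ M`. -/
def ExtSES.split (M N : Z2Cx R) : ExtSES M N where
  E := dsum R N M
  i := ⟨biprod.inl, biprod.inl, by simp [dsum], by simp [dsum]⟩
  p := ⟨biprod.snd, biprod.snd, by simp [dsum], by simp [dsum]⟩
  w0 := biprod.inl_snd
  w1 := biprod.inl_snd
  ex0 := (ShortComplex.Splitting.ofHasBinaryBiproduct N.X0 M.X0).shortExact
  ex1 := (ShortComplex.Splitting.ofHasBinaryBiproduct N.X1 M.X1).shortExact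

lemma ExtSES.split_extEquiv_of_section {M N : Z2Cx R} (s : ExtSES M N) (σ : M ⟶ s.E)
    (hσ : σ ≫ s.p = 𝟙 M) : ExtEquiv M N (split M N) s := by
  have hσ0 : Hom.f0 σ ≫ Hom.f0 s.p = 𝟙 M.X0 := congrArg Hom.f0 hσ
  have hσ1 : Hom.f1 σ ≫ Hom.f1 s.p = 𝟙 M.X1 := congrArg Hom.f1 hσ
  have hp0 : biprod.desc (Hom.f0 s.i) (Hom.f0 σ) ≫ Hom.f0 s.p = biprod.snd := by
    apply biprod.hom_ext' <;> simp [hσ0, s.w0]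
  have hp1 : biprod.desc (Hom.f1 s.i) (Hom.f1 σ) ≫ Hom.f1 s.p = biprod.snd := by
    apply biprod.hom_ext' <;> simp [hσ1, s.w1]
  exact .of_hom (dsumDesc s.i σ) (Hom.ext (biprod.inl_desc _ _) (biprod.inl_desc _ _))
    (Hom.ext hp0 hp1)

lemma ExtSES.extEquiv_split_of_retraction {M N : Z2Cx R} (s : ExtSES M N) (ρ : s.E ⟶ N)
    (hρ : s.i ≫ ρ = 𝟙 N) : ExtEquiv M N s (split M N) := by
  have hρ0 : Hom.f0 s.i ≫ Hom.f0 ρ = 𝟙 N.X0 := congrArg Hom.f0 hρ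
  have hρ1 : Hom.f1 s.i ≫ Hom.f1 ρ = 𝟙 N.X1 := congrArg Hom.f1 hρ
  have hi0 : Hom.f0 s.i ≫ biprod.lift (Hom.f0 ρ) (Hom.f0 s.p) = biprod.inl := by
    apply biprod.hom_ext <;> simp [hρ0, s.w0]
  have hi1 : Hom.f1 s.i ≫ biprod.lift (Hom.f1 ρ) (Hom.f1 s.p) = biprod.inl := by
    apply biprod.hom_ext <;> simp [hρ1, s.w1]
  exact .of_hom (dsumLift ρ s.p) (Hom.ext hi0 hi1)
    (Hom.ext (biprod.lift_snd _ _) (biprod.lift_snd _ _))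

lemma subsingleton_extCl_of_section {M N : Z2Cx R}
    (h : ∀ s : ExtSES M N, ∃ σ : M ⟶ s.E, σ ≫ s.p = 𝟙 M) : Subsingleton (ExtCl M N) := by
  refine subsingleton_of_forall_eq (Quot.mk _ (ExtSES.split M N)) (Quot.ind fun s => ?_)
  obtain ⟨σ, hσ⟩ := h s
  exact (Quot.sound (s.split_extEquiv_of_section σ hσ)).symm

lemma subsingleton_extCl_of_retraction {M N : Z2Cx R}
    (h : ∀ s : ExtSES M N, ∃ ρ : s.E ⟶ N, s.i ≫ ρ = 𝟙 N) : Subsingleton (ExtCl M N) := by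
  refine subsingleton_of_forall_eq (Quot.mk _ (ExtSES.split M N)) (Quot.ind fun s => ?_)
  obtain ⟨ρ, hρ⟩ := h s
  exact Quot.sound (s.extEquiv_split_of_retraction ρ hρ)

instance subsingleton_extCl_KP_left (P : R) [Projective P] (M : Z2Cx R) :
    Subsingleton (ExtCl (KP R P) M) := by
  refine subsingleton_extCl_of_section fun s => ?_
  have : Projective (ShortComplex.mk _ _ s.w1).X₃ := ‹Projective P›
  refine ⟨(homFromKPEquiv P s.E).symm s.ex1.splittingOfProjective.s, ?_⟩
  exact (homFromKPEquiv P (KP R P)).injective s.ex1.splittingOfProjective.s_g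

instance subsingleton_extCl_KP_right (P : R) (M : Z2Cx R) [Projective M.X0] :
    Subsingleton (ExtCl M (KP R P)) := by
  refine subsingleton_extCl_of_retraction fun s => ?_
  have : Projective (ShortComplex.mk _ _ s.w0).X₃ := ‹Projective M.X0›
  refine ⟨(homToKPEquiv P s.E).symm s.ex0.splittingOfProjective.r, ?_⟩
  exact (homToKPEquiv P (KP R P)).injective s.ex0.splittingOfProjective.f_r

lemma ccls_dsum_comm (M N : Z2Cx R) : ccls R (dsum R M N) = ccls R (dsum R N M) := by
  let f : dsum R M N ⟶ dsum R N M :=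
    { f0 := (biprod.braiding M.X0 N.X0).hom
      f1 := (biprod.braiding M.X1 N.X1).hom
      comm0 := by apply biprod.hom_ext <;> simp [dsum]
      comm1 := by apply biprod.hom_ext <;> simp [dsum] }
  have : IsIso (Hom.f0 f) := (biprod.braiding M.X0 N.X0).isIso_hom
  have : IsIso (Hom.f1 f) := (biprod.braiding M.X1 N.X1).isIso_hom
  exact Quot.sound ⟨isoOfComponents f⟩

lemma extCount_of_subsingleton (M N : Z2Cx R) [Subsingleton (ExtCl M N)] (c : CxCls R) :
    extCount R M N c = if c = ccls R (dsum R N M) then 1 else 0 := by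
  let x₀ : ExtCl M N := Quot.mk _ (ExtSES.split M N)
  split_ifs with hc
  · exact Nat.card_eq_one_iff_unique.2 ⟨inferInstance, ⟨⟨x₀, hc.symm⟩⟩⟩
  · have : IsEmpty {x : ExtCl M N // extMid R x = c} :=
      ⟨fun ⟨x, hx⟩ => hc (hx.symm.trans (congrArg (extMid R) (Subsingleton.elim x x₀)))⟩
    exact Nat.card_of_isEmpty

/-! ### Acyclic complexes -/

lemma acyclic_KP (P : R) : Acyclic R (KP R P) :=
  ⟨(ShortComplex.exact_iff_isZero_homology _).1
      ((ShortComplex.exact_iff_epi _ rfl).2 (inferInstanceAs (Epi (𝟙 P)))),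
    (ShortComplex.exact_iff_isZero_homology _).1
      ((ShortComplex.exact_iff_mono _ rfl).2 (inferInstanceAs (Mono (𝟙 P))))⟩

lemma Acyclic.card_hom_Hcx_left {M : Z2Cx R} (hM : Acyclic R M) (N : Z2Cx R) :
    Nat.card (Hcx R M ⟶ Hcx R N) = 1 :=
  Nat.card_eq_one_iff_unique.2
    ⟨⟨fun _ _ => Hom.ext (hM.1.eq_of_src _ _) (hM.2.eq_of_src _ _)⟩,
      ⟨⟨0, 0, by simp, by simp⟩⟩⟩

lemma Acyclic.card_hom_Hcx_right (M : Z2Cx R) {N : Z2Cx R} (hN : Acyclic R N) :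
    Nat.card (Hcx R M ⟶ Hcx R N) = 1 :=
  Nat.card_eq_one_iff_unique.2
    ⟨⟨fun _ _ => Hom.ext (hN.1.eq_of_tgt _ _) (hN.2.eq_of_tgt _ _)⟩,
      ⟨⟨0, 0, by simp, by simp⟩⟩⟩

lemma isZero_of_mono_d1_of_iso {M : Z2Cx R} [Mono M.d1] {A B A' B' : R} {f : A ⟶ B}
    {g : A' ⟶ B'} (e : M ≅ dsum R (Cf R f) (dagger R (Cf R g))) : IsZero B' := by
  have hfac := Hom.d1_comp_f0 e.inv
  have : Mono (Hom.f1 e.inv) := inferInstanceAs (Mono (isoX1 e).inv)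
  have hmono : Mono (dsum R (Cf R f) (dagger R (Cf R g))).d1 := mono_of_mono_fac hfac
  have : Mono (biprod.map f (-0 : B' ⟶ A')) := hmono
  have hinr : (biprod.inr : B' ⟶ A ⊞ B') = 0 :=
    zero_of_comp_mono (biprod.map f (-0 : B' ⟶ A')) (by simp)
  exact IsZero.of_mono_eq_zero _ hinr

end Z2Cx

/-! ### The twist `μ` and the product -/

namespace DecData

lemma cplus_eq_and_cminus_eq_zero_of_mono_d1 (dd : DecData R) (M : Z2Cx R) [Mono M.d1]
    (h0 : Projective M.X0) (h1 : Projective M.X1) :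
    dd.cplus M = K0.cls R M.X1 ∧ dd.cminus M = 0 := by
  obtain ⟨A, B, A', B', f, g, -, -, -, -, -, _, ⟨e⟩, hplus, hminus⟩ := dd.spec M h0 h1
  have hB' : IsZero B' := isZero_of_mono_d1_of_iso e
  have hA' : IsZero A' := hB'.of_mono g
  exact ⟨hplus.trans (K0.cls_congr (isoBiprodZero hB' ≪≫ (isoX1 e).symm)),
    hminus.trans (K0.cls_of_isZero hA')⟩

lemma cplus_KP (dd : DecData R) (P : R) [hP : Projective P] :
    dd.cplus (KP R P) = K0.cls R P :=
  have : Mono (KP R P).d1 := inferInstanceAs (Mono (𝟙 P))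
  (dd.cplus_eq_and_cminus_eq_zero_of_mono_d1 (KP R P) hP hP).1

lemma cminus_KP (dd : DecData R) (P : R) [hP : Projective P] : dd.cminus (KP R P) = 0 :=
  have : Mono (KP R P).d1 := inferInstanceAs (Mono (𝟙 P))
  (dd.cplus_eq_and_cminus_eq_zero_of_mono_d1 (KP R P) hP hP).2

end DecData

end

section

omit [Fintype k]

lemma mu_KP_left (ed : EulerData k R) (dd : DecData R) (P : R) [Projective P] (M : Z2Cx R) :
    mu ed dd (KP R P) M = ed.eQ (K0.cls R P) (K0.cls R M.X1) := by
  simp [mu, dd.cplus_KP, dd.cminus_KP]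

lemma mu_KP_right (ed : EulerData k R) (dd : DecData R) (P : R) [Projective P] (M : Z2Cx R) :
    mu ed dd M (KP R P) = ed.eQ (K0.cls R M.X0) (K0.cls R P) := by
  simp [mu, dd.cplus_KP, dd.cminus_KP]

end

lemma hallCoeff_of_subsingleton_extCl {v : ℝ} (hv0 : 0 < v) (hv2 : v ^ 2 = (Fintype.card k : ℝ))
    (ed : EulerData k R) (dd : DecData R) (M N : Z2Cx R) [Subsingleton (ExtCl M N)]
    (hcard : Nat.card (Hcx R M ⟶ Hcx R N) = 1) (c : CxCls R) :
    hallCoeff v ed dd M N c =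
      if c = ccls R (dsum R N M) then
        ((v ^ ((ed.eQ (K0.cls R M.X0) (K0.cls R N.X0) + ed.eQ (K0.cls R M.X1) (K0.cls R N.X1) -
          2 * mu ed dd M N : ℚ) : ℝ) : ℝ) : ℂ)
      else 0 := by
  have hq : (Fintype.card k : ℝ) ^ ((mu ed dd M N : ℚ) : ℝ) = v ^ (2 * (mu ed dd M N : ℝ)) := by
    rw [← hv2, Real.rpow_mul hv0.le, Real.rpow_two]
  simp only [hallCoeff, hVal, hcard, hq, extCount_of_subsingleton]
  split_ifs
  · simp only [Nat.cast_one, mul_one, Rat.cast_sub, Rat.cast_mul, Rat.cast_ofNat,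
      Real.rpow_sub hv0]
  · simp only [Nat.cast_zero, mul_zero, zero_div, Complex.ofReal_zero]

lemma hallCoeff_KP_left {v : ℝ} (hv0 : 0 < v) (hv2 : v ^ 2 = (Fintype.card k : ℝ))
    (ed : EulerData k R) (dd : DecData R) (P : R) [Projective P] (M : Z2Cx R) (c : CxCls R) :
    hallCoeff v ed dd (KP R P) M c =
      if c = ccls R (dsum R (KP R P) M) then
        ((v ^ ((ed.eQ (K0.cls R P) (clsOf R M) : ℚ) : ℝ) : ℝ) : ℂ)
      else 0 := by
  have hexp : ed.eQ (K0.cls R (KP R P).X0) (K0.cls R M.X0) +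
      ed.eQ (K0.cls R (KP R P).X1) (K0.cls R M.X1) - 2 * mu ed dd (KP R P) M =
        ed.eQ (K0.cls R P) (clsOf R M) := by
    simp only [mu_KP_left, KP_X0, KP_X1, clsOf, map_sub]
    ring
  rw [hallCoeff_of_subsingleton_extCl hv0 hv2 ed dd _ _ ((acyclic_KP P).card_hom_Hcx_left M),
    hexp, ccls_dsum_comm]

lemma hallCoeff_KP_right {v : ℝ} (hv0 : 0 < v) (hv2 : v ^ 2 = (Fintype.card k : ℝ))
    (ed : EulerData k R) (dd : DecData R) (P : R) [Projective P] (M : Z2Cx R) [Projective M.X0]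
    (c : CxCls R) :
    hallCoeff v ed dd M (KP R P) c =
      if c = ccls R (dsum R (KP R P) M) then
        ((v ^ ((-(ed.eQ (clsOf R M) (K0.cls R P)) : ℚ) : ℝ) : ℝ) : ℂ)
      else 0 := by
  have hexp : ed.eQ (K0.cls R M.X0) (K0.cls R (KP R P).X0) +
      ed.eQ (K0.cls R M.X1) (K0.cls R (KP R P).X1) - 2 * mu ed dd M (KP R P) =
        -(ed.eQ (clsOf R M) (K0.cls R P)) := by
    simp only [mu_KP_right, KP_X0, KP_X1, clsOf, map_sub, AddMonoidHom.sub_apply]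
    ring
  rw [hallCoeff_of_subsingleton_extCl hv0 hv2 ed dd _ _ ((acyclic_KP P).card_hom_Hcx_right M),
    hexp]

theorem stmt10_general {v : ℝ} (hv0 : 0 < v) (hv2 : v ^ 2 = (Fintype.card k : ℝ))
    (ed : EulerData k R) (dd : DecData R) (P : R) [Projective P] (M : Z2Cx R)
    [Projective M.X0] :
    (∀ c : CxCls R,
      hallCoeff v ed dd (KP R P) M c =
        if c = ccls R (dsum R (KP R P) M) then
          ((v ^ ((ed.eQ (K0.cls R P) (clsOf R M) : ℚ) : ℝ) : ℝ) : ℂ)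
        else 0) ∧
    (∀ c : CxCls R,
      hallCoeff v ed dd M (KP R P) c =
        if c = ccls R (dsum R (KP R P) M) then
          ((v ^ ((-(ed.eQ (clsOf R M) (K0.cls R P)) : ℚ) : ℝ) : ℝ) : ℂ)
        else 0) :=
  ⟨hallCoeff_KP_left hv0 hv2 ed dd P M, hallCoeff_KP_right hv0 hv2 ed dd P M⟩

theorem stmt10 (hH : Hereditary k R) (hc : CondC R) (hd : CondD R) (he : CondE R)
    (v : ℝ) (hv0 : 0 < v) (hv2 : v ^ 2 = (Fintype.card k : ℝ))
    (ed : EulerData k R) (dd : DecData R)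
    (P : R) (hP : Projective P) (M : Z2Cx R) (hM : FinCx R M) :
    (∀ c : CxCls R,
      hallCoeff v ed dd (KP R P) M c =
        if c = ccls R (dsum R (KP R P) M) then
          ((v ^ ((ed.eQ (K0.cls R P) (clsOf R M) : ℚ) : ℝ) : ℝ) : ℂ)
        else 0) ∧
    (∀ c : CxCls R,
      hallCoeff v ed dd M (KP R P) c =
        if c = ccls R (dsum R (KP R P) M) then
          ((v ^ ((-(ed.eQ (clsOf R M) (K0.cls R P)) : ℚ) : ℝ) : ℝ) : ℂ)
        else 0) := by
  have := hM.1
  exact stmt10_general hv0 hv2 ed dd P M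

end
end
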